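/- Let K ⊆ E be a pointed closed convex cone with nonempty interior, A : E → F* linear, b ∈ F*, c ∈ E*, C_P := {x ∈ K : A(x) = b}, C_D := {s ∈ K* : s ∈ Im(A*) − c}. Assume C_P meets the interior of K. Then for x̄ ∈ C_P, there exists s̄ ∈ C_D such that (x̄, s̄) is strictly complementary if and only if c ∈ relint(N_{C_P}(x̄)). -/

import Mathlib

open RealInnerProductSpace

/-- The normal cone of a convex set `C` at a point `x`. -/
def normalCone {E : Type*} [NormedAddCommGroup E] [InnerProductSpace ℝ E]
    (C : Set E) (x : E) : Set E :=
  {c | ∀ y ∈ C, ⟪c, y⟫ ≤ ⟪c, x⟫}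

/-!
For a point `x` of a convex cone `K`, let `D = K* ∩ x^⊥`. A dual vector that vanishes at a relative
interior point of a face vanishes on the whole face, so `D` is the conjugate face of every face
having `x` in its relative interior; there is such a face, and hence `(x, s)` is strictly
complementary iff `s ∈ relint D`. Under the Slater condition the sum rule for normal cones gives
`N_{C_P}(x) = Im A* - D`. The relative interior of convex sets commutes with linear images and
products, so `relint N_{C_P}(x) = Im A* - relint D`, and `c` lies in this set iff some `A* y - c`
lies in `relint D`.
-/

open Filter Set Topology
open scoped Pointwise

section RelativeInterior

section TopologicalAddTorsor

variable {𝕜 V P : Type*} [Ring 𝕜] [AddCommGroup V] [Module 𝕜 V] [TopologicalSpace P]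
  [AddTorsor V P]

theorem mem_intrinsicInterior_iff_mem_nhdsWithin {C : Set P} {x : P} :
    x ∈ intrinsicInterior 𝕜 C ↔ x ∈ affineSpan 𝕜 C ∧ C ∈ 𝓝[(affineSpan 𝕜 C : Set P)] x := by
  constructor
  · rintro ⟨y, hy, rfl⟩
    exact ⟨y.2, preimage_coe_mem_nhds_subtype.1 (mem_interior_iff_mem_nhds.1 hy)⟩
  · rintro ⟨hx, hC⟩
    exact ⟨⟨x, hx⟩, mem_interior_iff_mem_nhds.2 (preimage_coe_mem_nhds_subtype.2 hC), rfl⟩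

theorem intrinsicInterior_coe_affineSubspace (L : AffineSubspace 𝕜 P) :
    intrinsicInterior 𝕜 (L : Set P) = L := by
  refine intrinsicInterior_subset.antisymm fun x hx ↦ ?_
  rw [mem_intrinsicInterior_iff_mem_nhdsWithin, L.affineSpan_coe]
  exact ⟨hx, self_mem_nhdsWithin⟩

end TopologicalAddTorsor

section TopologicalVectorSpace

variable {V : Type*} [AddCommGroup V] [Module ℝ V] [TopologicalSpace V] [IsTopologicalAddGroup V]
  [ContinuousSMul ℝ V] {C : Set V} {x y : V}

theorem exists_mem_openSegment_of_mem_intrinsicInterior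
    (hx : x ∈ intrinsicInterior ℝ C) (hy : y ∈ C) : ∃ z ∈ C, x ∈ openSegment ℝ y z := by
  obtain ⟨hx, hC⟩ := mem_intrinsicInterior_iff_mem_nhdsWithin.1 hx
  have hline : Tendsto (fun t : ℝ ↦ AffineMap.lineMap x y (-t)) (𝓝[>] 0)
      (𝓝[(affineSpan ℝ C : Set V)] x) := by
    refine tendsto_nhdsWithin_iff.2 ⟨?_, .of_forall fun t ↦
      AffineMap.lineMap_mem _ hx (subset_affineSpan ℝ C hy)⟩
    have hcont : Continuous fun t : ℝ ↦ AffineMap.lineMap x y (-t) :=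
      AffineMap.lineMap_continuous.comp continuous_neg
    simpa using (hcont.tendsto 0).mono_left nhdsWithin_le_nhds
  obtain ⟨t, htC, ht⟩ := ((hline.eventually_mem hC).and self_mem_nhdsWithin).exists
  refine ⟨_, htC, t / (1 + t), 1 / (1 + t), by positivity, by positivity, by field_simp; ring, ?_⟩
  rw [AffineMap.lineMap_apply_module]
  match_scalars <;> field_simp <;> ring

theorem openSegment_subset_intrinsicInterior (hC : Convex ℝ C)
    (hx : x ∈ intrinsicInterior ℝ C) (hy : y ∈ C) :
    openSegment ℝ x y ⊆ intrinsicInterior ℝ C := by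
  rw [openSegment_symm, openSegment_eq_image_lineMap]
  rintro _ ⟨t, ⟨ht₀, ht₁⟩, rfl⟩
  obtain ⟨hxs, hxC⟩ := mem_intrinsicInterior_iff_mem_nhdsWithin.1 hx
  have hys := subset_affineSpan ℝ C hy
  refine mem_intrinsicInterior_iff_mem_nhdsWithin.2 ⟨AffineMap.lineMap_mem t hys hxs, ?_⟩
  -- The homothety of ratio `t⁻¹` centred at `y` maps a neighbourhood of the given point into `C`.
  have hdilate : Tendsto (fun v ↦ AffineMap.lineMap y v t⁻¹)
      (𝓝[(affineSpan ℝ C : Set V)] (AffineMap.lineMap y x t)) (𝓝[(affineSpan ℝ C : Set V)] x) := by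
    refine tendsto_nhdsWithin_iff.2 ⟨?_, eventually_mem_nhdsWithin.mono fun v hv ↦
      AffineMap.lineMap_mem _ hys hv⟩
    have hcont : Continuous fun v : V ↦ AffineMap.lineMap y v t⁻¹ := by
      simp only [AffineMap.lineMap_apply_module']
      fun_prop
    simpa [AffineMap.lineMap_apply_module', smul_smul, ht₀.ne'] using
      (hcont.tendsto (AffineMap.lineMap y x t)).mono_left nhdsWithin_le_nhds
  filter_upwards [hdilate.eventually_mem hxC] with v hv
  have hvt : AffineMap.lineMap y (AffineMap.lineMap y v t⁻¹) t = v := by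
    simp [AffineMap.lineMap_apply_module', smul_smul, ht₀.ne']
  exact hvt ▸ hC.lineMap_mem hy hv ⟨ht₀.le, ht₁.le⟩

end TopologicalVectorSpace

section FiniteDimensional

variable {V W : Type*} [NormedAddCommGroup V] [NormedSpace ℝ V] [FiniteDimensional ℝ V]
  [NormedAddCommGroup W] [NormedSpace ℝ W] [FiniteDimensional ℝ W]

theorem mem_intrinsicInterior_iff_forall_exists_mem_openSegment {C : Set V} (hC : Convex ℝ C)
    {x : V} :
    x ∈ intrinsicInterior ℝ C ↔ x ∈ C ∧ ∀ y ∈ C, ∃ z ∈ C, x ∈ openSegment ℝ y z := by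
  refine ⟨fun hx ↦ ⟨intrinsicInterior_subset hx, fun y hy ↦
    exists_mem_openSegment_of_mem_intrinsicInterior hx hy⟩, fun ⟨hxC, hx⟩ ↦ ?_⟩
  obtain ⟨y, hy⟩ := Set.Nonempty.intrinsicInterior hC ⟨x, hxC⟩
  obtain ⟨z, hz, hxyz⟩ := hx y (intrinsicInterior_subset hy)
  exact openSegment_subset_intrinsicInterior hC hy hz hxyz

theorem intrinsicInterior_image_affineMap {C : Set V} (hC : Convex ℝ C) (f : V →ᵃ[ℝ] W) :
    intrinsicInterior ℝ (f '' C) = f '' intrinsicInterior ℝ C := by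
  apply Subset.antisymm
  · intro w hw
    obtain ⟨x, hx⟩ := Set.Nonempty.intrinsicInterior hC
      (image_nonempty.1 ⟨w, intrinsicInterior_subset hw⟩)
    obtain ⟨_, ⟨y, hy, rfl⟩, hwxy⟩ := exists_mem_openSegment_of_mem_intrinsicInterior hw
      (mem_image_of_mem f (intrinsicInterior_subset hx))
    rw [← image_openSegment] at hwxy
    exact image_mono (openSegment_subset_intrinsicInterior hC hx hy) hwxy
  · rintro _ ⟨x, hx, rfl⟩
    refine (mem_intrinsicInterior_iff_forall_exists_mem_openSegment (hC.affine_image f)).2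
      ⟨mem_image_of_mem f (intrinsicInterior_subset hx), ?_⟩
    rintro _ ⟨y, hy, rfl⟩
    obtain ⟨z, hz, hxyz⟩ := exists_mem_openSegment_of_mem_intrinsicInterior hx hy
    exact ⟨f z, mem_image_of_mem f hz, image_openSegment ℝ f y z ▸ mem_image_of_mem f hxyz⟩

theorem intrinsicInterior_sub {C D : Set V} (hC : Convex ℝ C) (hD : Convex ℝ D) :
    intrinsicInterior ℝ (C - D) = intrinsicInterior ℝ C - intrinsicInterior ℝ D := by
  have hsub (S T : Set V) :
      S - T = (LinearMap.fst ℝ V V - LinearMap.snd ℝ V V).toAffineMap '' S ×ˢ T :=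
    sub_image_prod.symm
  rw [hsub, hsub, intrinsicInterior_image_affineMap (hC.prod hD), intrinsicInterior_prod_eq]

end FiniteDimensional

end RelativeInterior

section MinimalFace

variable {E : Type*} [AddCommGroup E] [Module ℝ E] {K : Set E} {x : E}

/-- The minimal face of `K` at `x`: the points of `K` that can be joined to `x` by a segment which
extends within `K` beyond `x`. For convex `K` and `x ∈ K` it is the face of `K` having `x` in its
relative interior. -/
def minimalFace (K : Set E) (x : E) : Set E :=
  {y ∈ K | ∃ z ∈ K, x ∈ openSegment ℝ y z}

theorem mem_minimalFace_self (hx : x ∈ K) : x ∈ minimalFace K x :=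
  ⟨hx, x, hx, by simp⟩

theorem convex_minimalFace (hK : Convex ℝ K) (x : E) : Convex ℝ (minimalFace K x) := by
  have hext {y : E} (hy : y ∈ minimalFace K x) :
      ∃ c : ℝ, 0 < c ∧ ∃ z ∈ K, y + c • z = (1 + c) • x := by
    obtain ⟨-, z, hz, a, b, ha, hb, hab, rfl⟩ := hy
    refine ⟨b / a, by positivity, z, hz, ?_⟩
    obtain rfl : b = 1 - a := by linarith
    match_scalars <;> field_simp <;> ring
  rw [convex_iff_openSegment_subset]
  rintro y₁ hy₁ y₂ hy₂ _ ⟨p, q, hp, hq, hpq, rfl⟩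
  refine ⟨hK hy₁.1 hy₂.1 hp.le hq.le hpq, ?_⟩
  obtain ⟨c₁, hc₁, z₁, hz₁, h₁⟩ := hext hy₁
  obtain ⟨c₂, hc₂, z₂, hz₂, h₂⟩ := hext hy₂
  set r := p * c₁ + q * c₂ with hr
  have hr₀ : 0 < r := by positivity
  refine ⟨(p * c₁ / r) • z₁ + (q * c₂ / r) • z₂,
    hK hz₁ hz₂ (by positivity) (by positivity) (by rw [← add_div, div_self hr₀.ne']),
    1 / (1 + r), r / (1 + r), by positivity, by positivity, by field_simp, ?_⟩
  calc _ = (1 / (1 + r)) • (p • (y₁ + c₁ • z₁) + q • (y₂ + c₂ • z₂)) := by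
        match_scalars <;> field_simp
    _ = x := by
        rw [h₁, h₂]
        match_scalars
        field_simp
        linear_combination hpq - hr

theorem isExtreme_minimalFace (hK : Convex ℝ K) (x : E) : IsExtreme ℝ K (minimalFace K x) := by
  refine ⟨sep_subset _ _, ?_⟩
  rintro y₁ hy₁ y₂ hy₂ _ ⟨-, z, hz, a, b, ha, hb, hab, rfl⟩ ⟨p, q, hp, hq, hpq, rfl⟩
  have hw : 0 < a * q + b := by positivity
  refine ⟨hy₁, (a * q / (a * q + b)) • y₂ + (b / (a * q + b)) • z,
    hK hy₂ hz (by positivity) (by positivity) (by rw [← add_div, div_self hw.ne']),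
    a * p, a * q + b, by positivity, hw, by linear_combination a * hpq + hab, ?_⟩
  match_scalars <;> field_simp

theorem mem_intrinsicInterior_minimalFace {E : Type*} [NormedAddCommGroup E] [NormedSpace ℝ E]
    [FiniteDimensional ℝ E] {K : Set E} (hK : Convex ℝ K) {x : E} (hx : x ∈ K) :
    x ∈ intrinsicInterior ℝ (minimalFace K x) := by
  refine (mem_intrinsicInterior_iff_forall_exists_mem_openSegment (convex_minimalFace hK x)).2
    ⟨mem_minimalFace_self hx, fun y ⟨hy, z, hz, hxyz⟩ ↦ ⟨z, ⟨hz, y, hy, ?_⟩, hxyz⟩⟩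
  rwa [openSegment_symm]

end MinimalFace

section ConjugateFace

variable {E : Type*} [NormedAddCommGroup E] [InnerProductSpace ℝ E] {K Fc : Set E} {x s : E}

/-- The conjugate face `K* ∩ Fc^⊥` of a subset `Fc` of `K`; the dual space is identified with `E`
through the inner product. -/
def conjugateFace (K Fc : Set E) : Set E :=
  {t | (∀ x ∈ K, 0 ≤ ⟪t, x⟫) ∧ ∀ f ∈ Fc, ⟪t, f⟫ = 0}

theorem convex_conjugateFace (K Fc : Set E) : Convex ℝ (conjugateFace K Fc) := by
  intro s hs t ht a b ha hb _
  refine ⟨fun y hy ↦ ?_, fun f hf ↦ ?_⟩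
  · have hsy := hs.1 y hy
    have hty := ht.1 y hy
    rw [inner_add_left, real_inner_smul_left, real_inner_smul_left]
    positivity
  · simp [inner_add_left, real_inner_smul_left, hs.2 f hf, ht.2 f hf]

theorem conjugateFace_eq_of_mem_intrinsicInterior (hFc : Fc ⊆ K) (hx : x ∈ intrinsicInterior ℝ Fc) :
    conjugateFace K Fc = conjugateFace K {x} := by
  ext t
  refine and_congr_right fun ht ↦ ⟨fun h ↦ ?_, fun h f hf ↦ ?_⟩
  · simpa using h x (intrinsicInterior_subset hx)
  · obtain ⟨z, hz, a, b, ha, hb, -, rfl⟩ := exists_mem_openSegment_of_mem_intrinsicInterior hx hf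
    have hzero : a * ⟪t, f⟫ + b * ⟪t, z⟫ = 0 := by
      simpa [inner_add_right, real_inner_smul_right] using h
    have hf₀ := ht f (hFc hf)
    have hz₀ := mul_nonneg hb.le (ht z (hFc hz))
    nlinarith

/-- Strict complementarity of `x` and `s` with respect to `K`: `x` lies in the relative interior of
a face of `K` and `s` in that of its conjugate face. Faces are encoded as convex extreme subsets. -/
def IsStrictlyComplementary (K : Set E) (x s : E) : Prop :=
  ∃ Fc : Set E, IsExtreme ℝ K Fc ∧ Convex ℝ Fc ∧
    x ∈ intrinsicInterior ℝ Fc ∧ s ∈ intrinsicInterior ℝ (conjugateFace K Fc)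

theorem isStrictlyComplementary_iff_mem_intrinsicInterior [FiniteDimensional ℝ E]
    (hK : Convex ℝ K) (hx : x ∈ K) :
    IsStrictlyComplementary K x s ↔ s ∈ intrinsicInterior ℝ (conjugateFace K {x}) := by
  constructor
  · rintro ⟨Fc, hFc, -, hxFc, hs⟩
    rwa [conjugateFace_eq_of_mem_intrinsicInterior hFc.subset hxFc] at hs
  · intro hs
    have hxFc := mem_intrinsicInterior_minimalFace hK hx
    have hFc := isExtreme_minimalFace hK x
    refine ⟨_, hFc, convex_minimalFace hK x, hxFc, ?_⟩
    rwa [conjugateFace_eq_of_mem_intrinsicInterior hFc.subset hxFc]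

end ConjugateFace

section NormalCone

variable {E : Type*} [NormedAddCommGroup E] [InnerProductSpace ℝ E] {C K : Set E}
  {L : AffineSubspace ℝ E} {x n : E}

theorem normalCone_eq_neg_conjugateFace (hK : ∀ y ∈ K, ∀ t : ℝ, 0 ≤ t → t • y ∈ K) (hx : x ∈ K) :
    normalCone K x = -conjugateFace K {x} := by
  ext n
  rw [Set.mem_neg]
  constructor
  · intro hn
    have hnx : ⟪n, x⟫ = 0 := by
      have hzero := hn _ (hK x hx 0 le_rfl)
      have htwo := hn _ (hK x hx 2 zero_le_two)
      rw [real_inner_smul_right] at hzero htwo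
      linarith
    exact ⟨fun y hy ↦ by simpa [hnx] using hn y hy, by simpa using hnx⟩
  · rintro ⟨hn, hnx⟩ y hy
    simp only [mem_singleton_iff, forall_eq, inner_neg_left, neg_eq_zero] at hnx
    simpa [hnx] using hn y hy

theorem normalCone_inter_subset_orthogonal (hx : x ∈ interior C) (hxL : x ∈ L) :
    normalCone (C ∩ L) x ⊆ L.directionᗮ := by
  intro n hn
  have hle {v : E} (hv : v ∈ L.direction) : ⟪n, v⟫ ≤ 0 := by
    have hline : Tendsto (fun t : ℝ ↦ x + t • v) (𝓝[>] 0) (𝓝 x) := by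
      have hcont : Continuous fun t : ℝ ↦ x + t • v := by fun_prop
      simpa using (hcont.tendsto 0).mono_left nhdsWithin_le_nhds
    obtain ⟨t, htC, ht⟩ :=
      ((hline.eventually_mem (mem_interior_iff_mem_nhds.1 hx)).and self_mem_nhdsWithin).exists
    have htL : x + t • v ∈ L := by
      simpa [add_comm] using
        AffineSubspace.vadd_mem_of_mem_direction (L.direction.smul_mem t hv) hxL
    have hnt := hn _ ⟨htC, htL⟩
    rw [inner_add_right, real_inner_smul_right] at hnt
    exact nonpos_of_mul_nonpos_right (by linarith) ht
  refine (Submodule.mem_orthogonal' _ _).2 fun v hv ↦ (hle hv).antisymm ?_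
  simpa using hle (neg_mem hv)

theorem exists_mem_normalCone_of_disjoint_interior [CompleteSpace E] (hC : Convex ℝ C)
    (hCne : (interior C).Nonempty) (hx : x ∈ C) (hxL : x ∈ L)
    (hCL : Disjoint (interior C) (L : Set E)) :
    ∃ p ∈ normalCone C x, p ∈ L.directionᗮ ∧ ∀ y ∈ interior C, ⟪p, y⟫ < ⟪p, x⟫ := by
  obtain ⟨φ, u, hφC, hφL⟩ :=
    geometric_hahn_banach_open hC.interior isOpen_interior L.convex hCL
  have hux : u ≤ φ x := hφL x hxL
  have hφu : ∀ y ∈ C, φ y ≤ u := by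
    intro y hy
    refine closure_minimal (fun z hz ↦ (hφC z hz).le) (isClosed_Iic.preimage φ.continuous) ?_
    rw [hC.closure_interior_eq_closure_of_nonempty_interior hCne]
    exact subset_closure hy
  have hφ (y : E) : ⟪(InnerProductSpace.toDual ℝ E).symm φ, y⟫ = φ y :=
    InnerProductSpace.toDual_symm_apply
  refine ⟨(InnerProductSpace.toDual ℝ E).symm φ, fun y hy ↦ ?_,
    (Submodule.mem_orthogonal' _ _).2 fun v hv ↦ ?_, fun y hy ↦ ?_⟩
  · rw [hφ, hφ]
    exact (hφu y hy).trans hux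
  · -- Since `φ x` is the minimum of `φ` on `L`, its value at `x - φ v • v` gives `(φ v) ^ 2 ≤ 0`.
    have hmem : x - φ v • v ∈ L := by
      simpa [sub_eq_neg_add] using
        AffineSubspace.vadd_mem_of_mem_direction (L.direction.smul_mem (-φ v) hv) hxL
    have hge := (hφu x hx).trans (hφL _ hmem)
    rw [map_sub, map_smul, smul_eq_mul] at hge
    rw [hφ]
    nlinarith
  · rw [hφ, hφ]
    exact (hφC y hy).trans_le hux

theorem sub_smul_mem_orthogonal {S : Submodule ℝ E} {p e : E} (hp : p ∈ (S ⊓ (ℝ ∙ n)ᗮ)ᗮ)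
    (he : e ∈ S) (hne : ⟪n, e⟫ ≠ 0) (hpe : ⟪p, e⟫ ≠ 0) :
    n - (⟪n, e⟫ / ⟪p, e⟫) • p ∈ Sᗮ := by
  refine (Submodule.mem_orthogonal' _ _).2 fun v hv ↦ ?_
  have hproj : v - (⟪n, v⟫ / ⟪n, e⟫) • e ∈ S ⊓ (ℝ ∙ n)ᗮ := by
    refine ⟨sub_mem hv (S.smul_mem _ he), Submodule.mem_orthogonal_singleton_iff_inner_right.2 ?_⟩
    rw [inner_sub_right, real_inner_smul_right, div_mul_cancel₀ _ hne, sub_self]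
  have hpv := (Submodule.mem_orthogonal' _ _).1 hp _ hproj
  rw [inner_sub_right, real_inner_smul_right, sub_eq_zero] at hpv
  rw [inner_sub_left, real_inner_smul_left, hpv]
  field_simp
  ring

theorem mem_orthogonal_add_normalCone_of_inner_lt [CompleteSpace E] (hC : Convex ℝ C) (hx : x ∈ C)
    (hxL : x ∈ L) (hn : n ∈ normalCone (C ∩ L) x) {y : E} (hy : y ∈ interior C) (hyL : y ∈ L)
    (hlt : ⟪n, y⟫ < ⟪n, x⟫) :
    n ∈ (L.directionᗮ : Set E) + normalCone C x := by
  have hyx : y - x ∈ L.direction := AffineSubspace.vsub_mem_direction hyL hxL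
  -- Separate `interior C` from the affine subspace of `L` on which `n` attains its maximum.
  let M := AffineSubspace.mk' x (L.direction ⊓ (ℝ ∙ n)ᗮ)
  have hCM : Disjoint (interior C) (M : Set E) := by
    rw [Set.disjoint_left]
    intro z hz hzM
    obtain ⟨hzx, hnzx⟩ := AffineSubspace.mem_mk'.1 hzM
    have hnz : ⟪n, z⟫ = ⟪n, x⟫ := by
      simpa [Submodule.mem_orthogonal_singleton_iff_inner_right, inner_sub_right, sub_eq_zero]
        using hnzx
    have hzL : z ∈ L := (AffineSubspace.vsub_right_mem_direction_iff_mem hxL z).1 hzx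
    have hnL : n ∈ L.directionᗮ :=
      normalCone_inter_subset_orthogonal hz hzL fun w hw ↦ (hn w hw).trans_eq hnz.symm
    have hnyx := (Submodule.mem_orthogonal' _ _).1 hnL _ hyx
    rw [inner_sub_right] at hnyx
    linarith
  obtain ⟨p, hp, hpM, hpC⟩ :=
    exists_mem_normalCone_of_disjoint_interior hC ⟨y, hy⟩ hx (AffineSubspace.self_mem_mk' x _) hCM
  rw [AffineSubspace.direction_mk'] at hpM
  have hnyx : ⟪n, y - x⟫ < 0 := by rwa [inner_sub_right, sub_neg]
  have hpyx : ⟪p, y - x⟫ < 0 := by rw [inner_sub_right, sub_neg]; exact hpC y hy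
  refine ⟨_, sub_smul_mem_orthogonal hpM hyx hnyx.ne hpyx.ne, (⟪n, y - x⟫ / ⟪p, y - x⟫) • p,
    fun z hz ↦ ?_, sub_add_cancel _ _⟩
  rw [real_inner_smul_left, real_inner_smul_left]
  exact mul_le_mul_of_nonneg_left (hp z hz) (div_pos_of_neg_of_neg hnyx hpyx).le

theorem normalCone_inter_affineSubspace [CompleteSpace E] (hC : Convex ℝ C)
    (hCL : (interior C ∩ L).Nonempty) (hx : x ∈ C) (hxL : x ∈ L) :
    normalCone (C ∩ L) x = (L.directionᗮ : Set E) + normalCone C x := by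
  obtain ⟨y, hy, hyL⟩ := hCL
  refine Subset.antisymm (fun n hn ↦ ?_) ?_
  · rcases (hn y ⟨interior_subset hy, hyL⟩).eq_or_lt with heq | hlt
    · exact ⟨n, normalCone_inter_subset_orthogonal hy hyL fun w hw ↦ (hn w hw).trans_eq heq.symm,
        0, by simp [normalCone], add_zero n⟩
    · exact mem_orthogonal_add_normalCone_of_inner_lt hC hx hxL hn hy hyL hlt
  · rintro _ ⟨m, hm, p, hp, rfl⟩ z ⟨hz, hzL⟩
    have hmz := (Submodule.mem_orthogonal' _ _).1 hm _ (AffineSubspace.vsub_mem_direction hzL hxL)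
    rw [vsub_eq_sub, inner_sub_right, sub_eq_zero] at hmz
    simpa [inner_add_left, hmz] using hp z hz

end NormalCone

section PrimalDual

variable {E F : Type*} [NormedAddCommGroup E] [InnerProductSpace ℝ E] [FiniteDimensional ℝ E]
  [NormedAddCommGroup F] [InnerProductSpace ℝ F] [FiniteDimensional ℝ F]
  {K : Set E} {A : E →ₗ[ℝ] F} {b : F} {x : E}

theorem normalCone_primalFeasible_eq (hKconv : Convex ℝ K)
    (hKcone : ∀ x ∈ K, ∀ t : ℝ, 0 ≤ t → t • x ∈ K) (hSlater : ∃ y ∈ interior K, A y = b)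
    (hx : x ∈ K) (hAx : A x = b) :
    normalCone {y ∈ K | A y = b} x = (A.adjoint.range : Set E) - conjugateFace K {x} := by
  have hmem (y : E) : y ∈ AffineSubspace.mk' x A.ker ↔ A y = b := by
    simp [AffineSubspace.mem_mk', sub_eq_zero, hAx]
  have hinter : {y ∈ K | A y = b} = K ∩ AffineSubspace.mk' x A.ker := by
    ext y
    simp [hmem]
  obtain ⟨y, hy, hAy⟩ := hSlater
  rw [hinter, normalCone_inter_affineSubspace hKconv ⟨y, hy, (hmem y).2 hAy⟩ hx
    (AffineSubspace.self_mem_mk' x _), AffineSubspace.direction_mk', A.orthogonal_ker,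
    normalCone_eq_neg_conjugateFace hKcone hx, sub_eq_add_neg]

theorem strict_complementarity_iff_relint_normal_cone_general (hKconv : Convex ℝ K)
    (hKcone : ∀ x ∈ K, ∀ t : ℝ, 0 ≤ t → t • x ∈ K) (hSlater : ∃ y ∈ interior K, A y = b)
    (hx : x ∈ K) (hAx : A x = b) (c : E) :
    (∃ s ∈ {s | (∀ y ∈ K, 0 ≤ ⟪s, y⟫) ∧ ∃ y : F, s = A.adjoint y - c},
        IsStrictlyComplementary K x s) ↔
      c ∈ intrinsicInterior ℝ (normalCone {y ∈ K | A y = b} x) := by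
  have hrange : intrinsicInterior ℝ (A.adjoint.range : Set E) = A.adjoint.range :=
    intrinsicInterior_coe_affineSubspace A.adjoint.range.toAffineSubspace
  rw [normalCone_primalFeasible_eq hKconv hKcone hSlater hx hAx,
    intrinsicInterior_sub A.adjoint.range.convex (convex_conjugateFace K {x}), hrange]
  simp only [isStrictlyComplementary_iff_mem_intrinsicInterior hKconv hx]
  constructor
  · rintro ⟨_, ⟨-, y, rfl⟩, hs⟩
    exact ⟨A.adjoint y, ⟨y, rfl⟩, _, hs, sub_sub_cancel _ c⟩
  · rintro ⟨_, ⟨y, rfl⟩, s, hs, rfl⟩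
    exact ⟨s, ⟨(intrinsicInterior_subset hs).1, y, (sub_sub_cancel _ s).symm⟩, hs⟩

end PrimalDual

theorem strict_complementarity_iff_relint_normal_cone
    {E F : Type*} [NormedAddCommGroup E] [InnerProductSpace ℝ E] [FiniteDimensional ℝ E]
    [NormedAddCommGroup F] [InnerProductSpace ℝ F] [FiniteDimensional ℝ F]
    (K : Set E) (hKclosed : IsClosed K) (hKconv : Convex ℝ K)
    (hKcone : ∀ x ∈ K, ∀ t : ℝ, 0 ≤ t → t • x ∈ K)
    (hKpointed : ∀ x ∈ K, -x ∈ K → x = 0)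
    (hKint : (interior K).Nonempty)
    (A : E →ₗ[ℝ] F) (b : F) (c : E)
    (CP : Set E) (hCP : CP = {x ∈ K | A x = b})
    (CD : Set E)
    (hCD : CD = {s | (∀ x ∈ K, 0 ≤ ⟪s, x⟫) ∧ ∃ y : F, s = LinearMap.adjoint A y - c})
    (hSlater : ∃ x ∈ CP, x ∈ interior K)
    (xb : E) (hxb : xb ∈ CP) :
    (∃ s ∈ CD, ∃ Fc : Set E, IsExtreme ℝ K Fc ∧ Convex ℝ Fc ∧
        xb ∈ intrinsicInterior ℝ Fc ∧
        s ∈ intrinsicInterior ℝ {t | (∀ x ∈ K, 0 ≤ ⟪t, x⟫) ∧ ∀ f ∈ Fc, ⟪t, f⟫ = 0})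
      ↔ c ∈ intrinsicInterior ℝ (normalCone CP xb) := by
  obtain ⟨y, hy, hyint⟩ := hSlater
  subst hCP hCD
  exact strict_complementarity_iff_relint_normal_cone_general hKconv hKcone ⟨y, hyint, hy.2⟩
    hxb.1 hxb.2 c
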